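/- Suppose G is a Grothendieck category in which Ext¹(P,-) preserves direct limits for every finitely presented object P. Then the finitely presented objects form an abelian exact subcategory: in particular, the kernel of any epimorphism between finitely presented objects is finitely presented. -/

import Mathlib

/-!
STATEMENT 5: Suppose `G` is a Grothendieck category in which `Ext¹(P,-)`
preserves direct limits for every finitely presented object `P`.  Then the
finitely presented objects form an abelian exact subcategory (closed under
finite coproducts and under kernels and cokernels computed in `G`); in
particular, the kernel of any epimorphism between finitely presented objects
is finitely presented.
-/

open CategoryTheory Limits Opposite Abelian

universe w v u

variable {C : Type u} [Category.{v} C]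

/-- `Hom(X, -)` preserves filtered colimits. -/
def FinitelyPresented (X : C) : Prop :=
  ∀ (J : Type v) [SmallCategory J] [IsFiltered J] (D : J ⥤ C) (c : Cocone D),
    Nonempty (IsColimit c) →
      Nonempty (IsColimit ((coyoneda.obj (op X)).mapCocone c))

/-- The canonical map `colim Ext¹(P, Y_i) → Ext¹(P, colim Y_i)` is bijective for
every filtered system, expressed element-wise. -/
def Ext1PreservesDirectLimits [Abelian C] [HasExt.{w} C] (P : C) : Prop :=
  ∀ (J : Type v) [SmallCategory J] [IsFiltered J] (D : J ⥤ C)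
    (c : Cocone D), IsColimit c →
    ((∀ (i : J) (e : Ext P (D.obj i) 1),
        e.comp (Ext.mk₀ (c.ι.app i)) (add_zero 1) = 0 →
        ∃ (j : J) (φ : i ⟶ j), e.comp (Ext.mk₀ (D.map φ)) (add_zero 1) = 0) ∧
      (∀ e : Ext P c.pt 1, ∃ (i : J) (e' : Ext P (D.obj i) 1),
        e'.comp (Ext.mk₀ (c.ι.app i)) (add_zero 1) = e))

namespace FinitelyPresented

/-- A morphism from a finitely presented object to a filtered colimit lifts to a stage under any
prescribed one. -/
lemma exists_lift {X : C} (hX : FinitelyPresented X) {J : Type v} [SmallCategory J] [IsFiltered J]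
    {D : J ⥤ C} {c : Cocone D} (hc : IsColimit c) (i : J) (f : X ⟶ c.pt) :
    ∃ (j : J) (_ : i ⟶ j) (f' : X ⟶ D.obj j), f' ≫ c.ι.app j = f := by
  obtain ⟨h⟩ := hX J D c ⟨hc⟩
  obtain ⟨k, f', hf'⟩ := Types.jointly_surjective_of_isColimit h f
  replace hf' : f' ≫ c.ι.app k = f := hf'
  exact ⟨IsFiltered.max i k, IsFiltered.leftToMax i k, f' ≫ D.map (IsFiltered.rightToMax i k),
    by simpa using hf'⟩

lemma exists_map_eq {X : C} (hX : FinitelyPresented X) {J : Type v} [SmallCategory J]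
    [IsFiltered J] {D : J ⥤ C} {c : Cocone D} (hc : IsColimit c) {i : J} (f g : X ⟶ D.obj i)
    (hfg : f ≫ c.ι.app i = g ≫ c.ι.app i) :
    ∃ (j : J) (φ : i ⟶ j), f ≫ D.map φ = g ≫ D.map φ := by
  obtain ⟨h⟩ := hX J D c ⟨hc⟩
  exact (Types.FilteredColimit.isColimit_eq_iff' h f g).1 hfg

lemma exists_map_eq_zero [Preadditive C] {X : C} (hX : FinitelyPresented X) {J : Type v}
    [SmallCategory J] [IsFiltered J] {D : J ⥤ C} {c : Cocone D} (hc : IsColimit c) {i : J}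
    (f : X ⟶ D.obj i) (hf : f ≫ c.ι.app i = 0) :
    ∃ (j : J) (φ : i ⟶ j), f ≫ D.map φ = 0 := by
  simpa using hX.exists_map_eq hc f 0 (by simpa using hf)

lemma of_exists [Preadditive C] {X : C}
    (hsurj : ∀ (J : Type v) [SmallCategory J] [IsFiltered J] (D : J ⥤ C) (c : Cocone D)
      (_ : IsColimit c) (f : X ⟶ c.pt), ∃ (j : J) (f' : X ⟶ D.obj j), f' ≫ c.ι.app j = f)
    (hinj : ∀ (J : Type v) [SmallCategory J] [IsFiltered J] (D : J ⥤ C) (c : Cocone D)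
      (_ : IsColimit c) (i : J) (f : X ⟶ D.obj i), f ≫ c.ι.app i = 0 →
      ∃ (j : J) (φ : i ⟶ j), f ≫ D.map φ = 0) :
    FinitelyPresented X := by
  rintro J _ _ D c ⟨hc⟩
  refine ⟨Types.FilteredColimit.isColimitOf' _ _ (fun f ↦ ?_) (fun i f g hfg ↦ ?_)⟩
  · obtain ⟨j, f', hf'⟩ := hsurj J D c hc f
    exact ⟨j, f', hf'.symm⟩
  · change X ⟶ D.obj i at f g
    replace hfg : f ≫ c.ι.app i = g ≫ c.ι.app i := hfg
    obtain ⟨j, φ, h⟩ := hinj J D c hc i (f - g) (by rw [Preadditive.sub_comp, hfg, sub_self])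
    rw [Preadditive.sub_comp, sub_eq_zero] at h
    exact ⟨j, φ, h⟩

lemma biprod [Abelian C] {X Y : C} (hX : FinitelyPresented X) (hY : FinitelyPresented Y) :
    FinitelyPresented (X ⊞ Y) := by
  refine of_exists (fun J _ _ D c hc f ↦ ?_) (fun J _ _ D c hc i f hf ↦ ?_)
  · obtain ⟨i, -, f₁, hf₁⟩ := hX.exists_lift hc (Classical.choice IsFiltered.nonempty) (biprod.inl ≫ f)
    obtain ⟨j, φ, f₂, hf₂⟩ := hY.exists_lift hc i (biprod.inr ≫ f)
    exact ⟨j, biprod.desc (f₁ ≫ D.map φ) f₂, by ext <;> simp [hf₁, hf₂]⟩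
  · obtain ⟨j, φ, h₁⟩ := hX.exists_map_eq_zero hc (biprod.inl ≫ f) (by simp [hf])
    obtain ⟨k, ψ, h₂⟩ := hY.exists_map_eq_zero hc (biprod.inr ≫ f ≫ D.map φ) (by simp [hf])
    refine ⟨k, φ ≫ ψ, ?_⟩
    ext
    · simpa using h₁ =≫ D.map ψ
    · simpa using h₂

lemma cokernel [Abelian C] {X Y : C} (hX : FinitelyPresented X) (hY : FinitelyPresented Y)
    (f : X ⟶ Y) : FinitelyPresented (cokernel f) := by
  refine of_exists (fun J _ _ D c hc g ↦ ?_) (fun J _ _ D c hc i g hg ↦ ?_)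
  · obtain ⟨i, -, g', hg'⟩ := hY.exists_lift hc (Classical.choice IsFiltered.nonempty) (cokernel.π f ≫ g)
    obtain ⟨j, φ, h⟩ := hX.exists_map_eq_zero hc (f ≫ g') (by simp [hg'])
    exact ⟨j, cokernel.desc f (g' ≫ D.map φ) (by simpa using h), by ext; simp [hg']⟩
  · obtain ⟨j, φ, h⟩ := hY.exists_map_eq_zero hc (cokernel.π f ≫ g) (by simp [hg])
    exact ⟨j, φ, by ext; simpa using h⟩

end FinitelyPresented

lemma CategoryTheory.ShortComplex.ShortExact.extClass_comp_mk₀_eq_zero_iff [Abelian C]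
    [HasExt.{w} C] {S : ShortComplex C} (hS : S.ShortExact) {Z : C} (a : S.X₁ ⟶ Z) :
    hS.extClass.comp (Ext.mk₀ a) (add_zero 1) = 0 ↔ ∃ b : S.X₂ ⟶ Z, S.f ≫ b = a := by
  constructor
  · intro h
    obtain ⟨x, hx⟩ := Ext.contravariant_sequence_exact₁ hS Z (Ext.mk₀ a) (add_zero 1) h
    obtain ⟨b, rfl⟩ := (Ext.mk₀_bijective S.X₂ Z).2 x
    rw [Ext.mk₀_comp_mk₀] at hx
    exact ⟨b, (Ext.mk₀_bijective S.X₁ Z).1 hx⟩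
  · rintro ⟨b, rfl⟩
    rw [← Ext.mk₀_comp_mk₀, hS.extClass_comp_assoc]

lemma FinitelyPresented.of_shortExact [Abelian C] [HasExt.{w} C] {S : ShortComplex C}
    (hS : S.ShortExact) (h₂ : FinitelyPresented S.X₂) (h₃ : FinitelyPresented S.X₃)
    (hExt₂ : Ext1PreservesDirectLimits.{w} S.X₂) (hExt₃ : Ext1PreservesDirectLimits.{w} S.X₃) :
    FinitelyPresented S.X₁ := by
  have := hS.epi_g
  refine of_exists (fun J _ _ D c hc a ↦ ?_) (fun J _ _ D c hc i a ha ↦ ?_)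
  · obtain ⟨i, e, he⟩ := (hExt₃ J D c hc).2 (hS.extClass.comp (Ext.mk₀ a) (add_zero 1))
    obtain ⟨j, φ, hφ⟩ := (hExt₂ J D c hc).1 i ((Ext.mk₀ S.g).comp e (zero_add 1)) (by
      rw [Ext.comp_assoc_of_third_deg_zero, he, hS.comp_extClass_assoc])
    rw [Ext.comp_assoc_of_third_deg_zero] at hφ
    obtain ⟨x, hx⟩ := Ext.contravariant_sequence_exact₃ hS _ _ hφ (add_zero 1)
    obtain ⟨a', rfl⟩ := (Ext.mk₀_bijective _ _).2 x
    obtain ⟨p, hp⟩ : ∃ p : S.X₁ ⟶ c.pt, p = a' ≫ c.ι.app j := ⟨_, rfl⟩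
    obtain ⟨b, hb⟩ := (hS.extClass_comp_mk₀_eq_zero_iff (a - p)).1 (by
      rw [hp, sub_eq_add_neg, Ext.mk₀_add, Ext.mk₀_neg, Ext.comp_add, Ext.comp_neg,
        ← Ext.mk₀_comp_mk₀, ← Ext.comp_assoc_of_third_deg_zero, hx,
        Ext.comp_assoc_of_third_deg_zero, Ext.mk₀_comp_mk₀, c.w, he, add_neg_cancel])
    obtain ⟨k, ψ, b', hb'⟩ := h₂.exists_lift hc j b
    exact ⟨k, a' ≫ D.map ψ + S.f ≫ b', by simp [hb', hb, ← hp]⟩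
  · obtain ⟨j, φ, hφ⟩ := (hExt₃ J D c hc).1 i (hS.extClass.comp (Ext.mk₀ a) (add_zero 1)) (by
      rw [Ext.comp_assoc_of_third_deg_zero, Ext.mk₀_comp_mk₀, ha, Ext.mk₀_zero, Ext.comp_zero])
    rw [Ext.comp_assoc_of_third_deg_zero, Ext.mk₀_comp_mk₀,
      hS.extClass_comp_mk₀_eq_zero_iff] at hφ
    obtain ⟨b, hb⟩ := hφ
    have hbι : S.f ≫ b ≫ c.ι.app j = 0 := by rw [reassoc_of% hb, c.w, ha]
    obtain ⟨k, ψ, d, hd⟩ := h₃.exists_lift hc j (hS.exact.desc (b ≫ c.ι.app j) hbι)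
    obtain ⟨l, χ, hχ⟩ := h₂.exists_map_eq hc (b ≫ D.map ψ) (S.g ≫ d) (by simp [hd])
    refine ⟨l, φ ≫ ψ ≫ χ, ?_⟩
    rw [D.map_comp, D.map_comp, ← reassoc_of% hb, ← Category.assoc b, hχ]
    simp

theorem fp_abelian_exact_subcategory
    [Abelian C] [HasColimits C] [AB5 C] [HasExt.{w} C]
    (hsep : ∃ G : C, IsSeparator G)
    (hext : ∀ P : C, FinitelyPresented P → Ext1PreservesDirectLimits.{w} P) :
    (∀ X Y : C, FinitelyPresented X → FinitelyPresented Y →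
        FinitelyPresented (X ⊞ Y)) ∧
    (∀ (X Y : C) (f : X ⟶ Y), FinitelyPresented X → FinitelyPresented Y →
        FinitelyPresented (kernel f) ∧ FinitelyPresented (cokernel f)) ∧
    (∀ (X Y : C) (f : X ⟶ Y), Epi f → FinitelyPresented X →
        FinitelyPresented Y → FinitelyPresented (kernel f)) := by
  have kernel_of_epi {X Y : C} (f : X ⟶ Y) [Epi f] (hX : FinitelyPresented X)
      (hY : FinitelyPresented Y) : FinitelyPresented (kernel f) := by
    have hS : (ShortComplex.mk (kernel.ι f) f (kernel.condition f)).ShortExact :=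
      { exact := ShortComplex.exact_kernel f }
    exact .of_shortExact hS hX hY (hext X hX) (hext Y hY)
  refine ⟨fun X Y hX hY ↦ hX.biprod hY, fun X Y f hX hY ↦ ⟨?_, hX.cokernel hY f⟩,
    fun X Y f _ hX hY ↦ kernel_of_epi f hX hY⟩
  have hI : FinitelyPresented (Abelian.image f) :=
    kernel_of_epi (cokernel.π f) hY (hX.cokernel hY f)
  have w : kernel.ι f ≫ Abelian.factorThruImage f = 0 := by
    simp [← cancel_mono (Abelian.image.ι f)]
  have hS : (ShortComplex.mk (kernel.ι f) (Abelian.factorThruImage f) w).ShortExact :=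
    { exact := ShortComplex.exact_of_f_is_kernel _ (KernelFork.IsLimit.ofι' _ _ fun k hk ↦
        ⟨kernel.lift f k (by
          rw [← Abelian.image.fac f, reassoc_of% hk, zero_comp]), by simp⟩) }
  exact .of_shortExact hS hX hI (hext X hX) (hext _ hI)
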